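/- Let H = {x∈ℝ^N : x_N ≥ 1} with the path metric d_H induced by the hyperbolic metric of the upper half-space model of ℍ^N, identify ℝ^{N−1} with Euclidean metric ‖·‖ with ℝ^{N−1}×{1}⊂H, and for x∈ℝ^{N−1} let γ_x(t)=(x,e^t) for t≥0. Then H is an admissible horoball over ℝ^{N−1}: (i) there is a universal constant C such that |d_H((x,e^m),(y,e^n)) − (2·log(‖x−y‖·e^{−max{m,n}}+1)+|m−n|)| ≤ C for all x,y∈ℝ^{N−1} and m,n≥0; (ii) there is L≥1 with d_H((x,1),(y,1)) ≥ ‖x−y‖/L whenever d_H((x,1),(y,1))≤1; (iii) every point of H is within distance C of some ray γ_x; (iv) each γ_x is a geodesic ray, H is Gromov hyperbolic, and its Gromov boundary is a single point. -/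

import Mathlib

/-!
Up to a bounded factor, the geodesic from `(x, s)` to `(y, t)` climbs to the height
`K = ‖x - y‖ + s + t` and comes down again, so that its length is
`(log K - log s) + (log K - log t)` with an error of at most `2 log 2`. `K` inherits symmetry and
the triangle inequality from `ℝ^N`, whose place any pseudometric space can take. In a quadrilateral
whose sides and diagonals are measured by `K`, the product of the diagonals is therefore at most
four times the larger product of opposite sides; taking logarithms gives the four-point condition.
In the horoball the heights are at least `1`, so a point far from the base point `o` has a large
`K`, and `K(p, q) ≤ K(o, p) + K(o, q)` then makes the Gromov product of any two far points large:
all sequences going to infinity are equivalent.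
-/

noncomputable section

open Metric Set Filter

namespace RelHypPaper

variable {N : ℕ}

/-- the hyperbolic distance between two points of the upper half-space model
`ℝ^{N} × (0,∞)` of `ℍ^{N+1}`. -/
def upDist {N : ℕ} (p q : EuclideanSpace ℝ (Fin N) × ℝ) : ℝ :=
  2 * Real.log
    ((Real.sqrt (‖p.1 - q.1‖ ^ 2 + (p.2 - q.2) ^ 2) +
      Real.sqrt (‖p.1 - q.1‖ ^ 2 + (p.2 + q.2) ^ 2)) /
    (2 * Real.sqrt (p.2 * q.2)))

/-- the Gromov product on the horoball `H = {x_N ≥ 1}` with respect to the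
hyperbolic distance. -/
def upGromovProd {N : ℕ} (o p q : EuclideanSpace ℝ (Fin N) × ℝ) : ℝ :=
  (upDist o p + upDist o q - upDist p q) / 2

/-- a sequence in `H` going to infinity in the Gromov sense. -/
def upGromovSeq {N : ℕ} (u : ℕ → EuclideanSpace ℝ (Fin N) × ℝ) : Prop :=
  (∀ k, 1 ≤ (u k).2) ∧
    Filter.Tendsto (fun pr : ℕ × ℕ => upGromovProd ((0 : EuclideanSpace ℝ (Fin N)), 1) (u pr.1) (u pr.2))
      Filter.atTop Filter.atTop

/-- two Gromov sequences converge to the same boundary point. -/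
def upGromovEquiv {N : ℕ} (u v : ℕ → EuclideanSpace ℝ (Fin N) × ℝ) : Prop :=
  Filter.Tendsto (fun pr : ℕ × ℕ => upGromovProd ((0 : EuclideanSpace ℝ (Fin N)), 1) (u pr.1) (v pr.2))
    Filter.atTop Filter.atTop

section RealInequalities

open Real

lemma sinh_le_two_mul {t : ℝ} (ht₀ : 0 ≤ t) (ht : t ≤ 1 / 2) : sinh t ≤ 2 * t := by
  have h_exp : exp t ≤ 1 / (1 - t) := exp_bound_div_one_sub_of_interval ht₀ (by linarith)
  have h_inv : 1 / (1 - t) ≤ 1 + 2 * t := by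
    rw [div_le_iff₀ (by linarith)]; nlinarith
  rw [sinh_eq]
  linarith [one_sub_le_exp_neg t]

lemma log_add_log_le_of_mul_le_four_mul {a b c e : ℝ} (ha : 0 < a) (hb : 0 < b) (hc : 0 < c)
    (he : 0 < e) (h : a * b ≤ 4 * (c * e)) : log a + log b ≤ log c + log e + 2 * log 2 := by
  have h_four : log 4 = 2 * log 2 := by rw [show (4 : ℝ) = 2 ^ 2 by norm_num, log_pow]; norm_cast
  have := log_le_log (by positivity) h
  rw [log_mul ha.ne' hb.ne', log_mul four_ne_zero (by positivity), log_mul hc.ne' he.ne'] at this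
  linarith

lemma two_mul_log_mul_exp_neg_max_add_abs_sub {a : ℝ} (ha : 0 ≤ a) (m n : ℝ) :
    2 * log (a * exp (-max m n) + 1) + |m - n| = 2 * log (a + exp (max m n)) - m - n := by
  have h_factor : a * exp (-max m n) + 1 = (a + exp (max m n)) / exp (max m n) := by
    rw [exp_neg]; field_simp
  rw [h_factor, log_div (by positivity) (exp_ne_zero _), log_exp]
  linarith [max_sub_min_eq_abs' m n, max_add_min m n]

lemma mul_le_four_mul_of_min_le_min {a b c e x y : ℝ} (hx : 0 ≤ x) (hy : 0 ≤ y)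
    (hxac : x ≤ a + c) (hxbe : x ≤ b + e) (hyae : y ≤ a + e) (hybc : y ≤ b + c)
    (h : min a b ≤ min c e) : x * y ≤ 4 * (c * e) := by
  rcases le_total a b with hab | hba
  · rw [min_eq_left hab, le_min_iff] at h
    have := mul_le_mul (by linarith : x ≤ 2 * c) (by linarith : y ≤ 2 * e) hy (by linarith)
    linarith
  · rw [min_eq_right hba, le_min_iff] at h
    have := mul_le_mul (by linarith : x ≤ 2 * e) (by linarith : y ≤ 2 * c) hy (by linarith)
    linarith

end RealInequalities

section GromovProduct

variable {α : Type*} {d : α → α → ℝ} {o p q r : α}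

/-- The Gromov product `(p | q)_o` with respect to a distance function `d`, on which no metric
axioms are imposed. -/
def gromovProd (d : α → α → ℝ) (o p q : α) : ℝ :=
  (d o p + d o q - d p q) / 2

/-- Two sequences converge to the same point of the Gromov boundary: `(u i | v j)_o → ∞` as
`i, j → ∞`. The Gromov sequences are those with `GromovEquiv d o u u`. -/
def GromovEquiv (d : α → α → ℝ) (o : α) (u v : ℕ → α) : Prop :=
  Tendsto (fun ij : ℕ × ℕ ↦ gromovProd d o (u ij.1) (v ij.2)) atTop atTop

lemma min_gromovProd_sub_le_of_four_point {δ : ℝ}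
    (h : d p r + d o q ≤ max (d p q + d o r) (d q r + d o p) + 2 * δ) :
    min (gromovProd d o p q) (gromovProd d o q r) - δ ≤ gromovProd d o p r := by
  rw [sub_le_iff_le_add, min_le_iff]
  rw [← sub_le_iff_le_add, le_max_iff] at h
  unfold gromovProd
  exact h.imp (fun _ ↦ by linarith) (fun _ ↦ by linarith)

lemma GromovEquiv.tendsto_dist {u : ℕ → α} (hu : GromovEquiv d o u u)
    (hd : ∀ k, d (u k) (u k) = 0) : Tendsto (fun k ↦ d o (u k)) atTop atTop :=
  (hu.comp tendsto_atTop_diagonal).congr fun k ↦ by simp [gromovProd, hd]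

lemma gromovEquiv_of_half_min_dist_sub_le {u v : ℕ → α} {c : ℝ}
    (h : ∀ i j, min (d o (u i)) (d o (v j)) / 2 - c ≤ gromovProd d o (u i) (v j))
    (hu : Tendsto (fun k ↦ d o (u k)) atTop atTop)
    (hv : Tendsto (fun k ↦ d o (v k)) atTop atTop) : GromovEquiv d o u v := by
  rw [GromovEquiv, ← prod_atTop_atTop_eq]
  have h_min := tendsto_inf_atTop _ (hu.comp tendsto_fst) (hv.comp tendsto_snd)
  exact tendsto_atTop_mono (fun ij ↦ h ij.1 ij.2)
    (tendsto_atTop_add_const_right _ (-c) (h_min.atTop_div_const two_pos))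

end GromovProduct

section HalfSpace

open Real

variable {X : Type*} [PseudoMetricSpace X] {o p q r : X × ℝ}

/-- The distance of the upper half-space model over an arbitrary pseudometric space `X` in place
of `ℝ^N`. Any three points of `X` can be placed in the Euclidean plane at the same distances,
so this is a pseudometric on the points of positive height; elsewhere it has no meaning. -/
def halfSpaceDist (p q : X × ℝ) : ℝ :=
  2 * log ((√(dist p.1 q.1 ^ 2 + (p.2 - q.2) ^ 2) + √(dist p.1 q.1 ^ 2 + (p.2 + q.2) ^ 2)) /
    (2 * √(p.2 * q.2)))

/-- The height that the geodesic of the upper half-space from `p` to `q` reaches, up to a bounded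
factor. -/
def apexHeight (p q : X × ℝ) : ℝ :=
  dist p.1 q.1 + p.2 + q.2

lemma apexHeight_pos (hp : 0 < p.2) (hq : 0 < q.2) : 0 < apexHeight p q := by
  unfold apexHeight; positivity

lemma apexHeight_comm (p q : X × ℝ) : apexHeight p q = apexHeight q p := by
  unfold apexHeight; rw [dist_comm]; ring

lemma apexHeight_triangle (p r : X × ℝ) (hq : 0 ≤ q.2) :
    apexHeight p r ≤ apexHeight p q + apexHeight q r := by
  unfold apexHeight; linarith [dist_triangle p.1 q.1 r.1]

lemma apexHeight_le_sqrt_add_sqrt (p q : X × ℝ) :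
    apexHeight p q ≤
      √(dist p.1 q.1 ^ 2 + (p.2 - q.2) ^ 2) + √(dist p.1 q.1 ^ 2 + (p.2 + q.2) ^ 2) := by
  have h_dist : dist p.1 q.1 ≤ √(dist p.1 q.1 ^ 2 + (p.2 - q.2) ^ 2) :=
    le_sqrt_of_sq_le (le_add_of_nonneg_right (sq_nonneg _))
  have h_height : p.2 + q.2 ≤ √(dist p.1 q.1 ^ 2 + (p.2 + q.2) ^ 2) :=
    le_sqrt_of_sq_le (le_add_of_nonneg_left (sq_nonneg _))
  unfold apexHeight; linarith

lemma sqrt_add_sqrt_le_two_mul_apexHeight (hp : 0 ≤ p.2) (hq : 0 ≤ q.2) :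
    √(dist p.1 q.1 ^ 2 + (p.2 - q.2) ^ 2) + √(dist p.1 q.1 ^ 2 + (p.2 + q.2) ^ 2) ≤
      2 * apexHeight p q := by
  have h_prod : 0 ≤ dist p.1 q.1 * (p.2 + q.2) := by positivity
  have h_sub : √(dist p.1 q.1 ^ 2 + (p.2 - q.2) ^ 2) ≤ apexHeight p q := by
    unfold apexHeight
    exact sqrt_le_iff.2 ⟨by positivity, by linarith [mul_nonneg hp hq]⟩
  have h_add : √(dist p.1 q.1 ^ 2 + (p.2 + q.2) ^ 2) ≤ apexHeight p q := by
    unfold apexHeight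
    exact sqrt_le_iff.2 ⟨by positivity, by linarith⟩
  linarith

lemma halfSpaceDist_eq_log_sub (hp : 0 < p.2) (hq : 0 < q.2) :
    halfSpaceDist p q =
      2 * log (√(dist p.1 q.1 ^ 2 + (p.2 - q.2) ^ 2) + √(dist p.1 q.1 ^ 2 + (p.2 + q.2) ^ 2)) -
        log p.2 - log q.2 - 2 * log 2 := by
  have h_pos := (apexHeight_pos hp hq).trans_le (apexHeight_le_sqrt_add_sqrt p q)
  rw [halfSpaceDist, log_div h_pos.ne' (by positivity), log_mul two_ne_zero (by positivity),
    log_sqrt (by positivity), log_mul hp.ne' hq.ne']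
  ring

lemma le_halfSpaceDist (hp : 0 < p.2) (hq : 0 < q.2) :
    2 * log (apexHeight p q) - log p.2 - log q.2 - 2 * log 2 ≤ halfSpaceDist p q := by
  have := log_le_log (apexHeight_pos hp hq) (apexHeight_le_sqrt_add_sqrt p q)
  rw [halfSpaceDist_eq_log_sub hp hq]
  linarith

lemma halfSpaceDist_le (hp : 0 < p.2) (hq : 0 < q.2) :
    halfSpaceDist p q ≤ 2 * log (apexHeight p q) - log p.2 - log q.2 := by
  have hK := apexHeight_pos hp hq
  have := log_le_log (hK.trans_le (apexHeight_le_sqrt_add_sqrt p q))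
    (sqrt_add_sqrt_le_two_mul_apexHeight hp.le hq.le)
  rw [log_mul two_ne_zero hK.ne'] at this
  rw [halfSpaceDist_eq_log_sub hp hq]
  linarith

lemma halfSpaceDist_vertical (x : X) {s t : ℝ} (hs : 0 < s) (ht : 0 < t) :
    halfSpaceDist (x, s) (x, t) = |log s - log t| := by
  have h_max : |s - t| + (s + t) = 2 * max s t := by
    linarith [max_sub_min_eq_abs' s t, max_add_min s t]
  have h_log_max : log (max s t) = max (log s) (log t) :=
    strictMonoOn_log.monotoneOn.map_max hs ht
  rw [halfSpaceDist_eq_log_sub hs ht]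
  simp only [dist_self, zero_pow two_ne_zero, zero_add, sqrt_sq_eq_abs, abs_of_pos (add_pos hs ht)]
  rw [h_max, log_mul two_ne_zero (lt_max_of_lt_left hs).ne', h_log_max]
  linarith [max_sub_min_eq_abs' (log s) (log t), max_add_min (log s) (log t)]

lemma halfSpaceDist_vertical_exp (x : X) (s t : ℝ) :
    halfSpaceDist (x, exp s) (x, exp t) = |s - t| := by
  rw [halfSpaceDist_vertical x (exp_pos s) (exp_pos t), log_exp, log_exp]

lemma halfSpaceDist_self (hp : 0 < p.2) : halfSpaceDist p p = 0 := by
  simpa using halfSpaceDist_vertical p.1 hp hp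

lemma halfSpaceDist_horosphere (x y : X) {s : ℝ} (hs : 0 < s) :
    halfSpaceDist (x, s) (y, s) = 2 * arsinh (dist x y / (2 * s)) := by
  have h_sqrt : √(dist x y ^ 2 + (s + s) ^ 2) = 2 * s * √(1 + (dist x y / (2 * s)) ^ 2) := by
    rw [← sqrt_sq (by positivity : 0 ≤ 2 * s), ← sqrt_mul (by positivity),
      sqrt_sq (by positivity : 0 ≤ 2 * s)]
    congr 1; field_simp; ring
  simp only [halfSpaceDist, arsinh, sub_self, zero_pow two_ne_zero, add_zero,
    sqrt_sq dist_nonneg, sqrt_mul_self hs.le]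
  rw [h_sqrt, add_div, mul_div_cancel_left₀ _ (by positivity)]

lemma half_dist_le_halfSpaceDist_horosphere {x y : X}
    (h : halfSpaceDist (x, 1) (y, 1) ≤ 1) : dist x y / 2 ≤ halfSpaceDist (x, 1) (y, 1) := by
  rw [halfSpaceDist_horosphere x y one_pos, mul_one] at h ⊢
  have h_nonneg : 0 ≤ arsinh (dist x y / 2) := arsinh_nonneg_iff.2 (by positivity)
  simpa only [sinh_arsinh] using sinh_le_two_mul h_nonneg (by linarith)

lemma abs_halfSpaceDist_exp_sub_le (x y : X) (m n : ℝ) :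
    |halfSpaceDist (x, exp m) (y, exp n) -
      (2 * log (dist x y * exp (-max m n) + 1) + |m - n|)| ≤ 2 * log 2 := by
  have h_pos : 0 < dist x y + exp (max m n) := by positivity
  have h_exp : exp (max m n) = max (exp m) (exp n) := exp_monotone.map_max
  have h_lower : dist x y + exp (max m n) ≤ apexHeight (x, exp m) (y, exp n) := by
    simp only [apexHeight, h_exp, add_assoc]
    gcongr
    exact max_le_add_of_nonneg (exp_nonneg m) (exp_nonneg n)
  have h_upper : apexHeight (x, exp m) (y, exp n) ≤ 2 * (dist x y + exp (max m n)) := by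
    simp only [apexHeight, h_exp]
    linarith [le_max_left (exp m) (exp n), le_max_right (exp m) (exp n),
      dist_nonneg (x := x) (y := y)]
  have h_log_lower := log_le_log h_pos h_lower
  have h_log_upper := log_le_log (h_pos.trans_le h_lower) h_upper
  rw [log_mul two_ne_zero h_pos.ne'] at h_log_upper
  have h_ge := le_halfSpaceDist (p := (x, exp m)) (q := (y, exp n)) (exp_pos m) (exp_pos n)
  have h_le := halfSpaceDist_le (p := (x, exp m)) (q := (y, exp n)) (exp_pos m) (exp_pos n)
  simp only [log_exp] at h_ge h_le
  rw [two_mul_log_mul_exp_neg_max_add_abs_sub dist_nonneg, abs_le]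
  constructor <;> linarith

/-- Each diagonal forms a triangle with the shortest of the four sides and one of its neighbours, so
it is at most twice that neighbour, and the two neighbours are opposite sides. -/
lemma apexHeight_mul_apexHeight_le (ho : 0 ≤ o.2) (hp : 0 ≤ p.2) (hq : 0 ≤ q.2) (hr : 0 ≤ r.2) :
    apexHeight p r * apexHeight o q ≤ 4 * (apexHeight p q * apexHeight o r) ∨
      apexHeight p r * apexHeight o q ≤ 4 * (apexHeight q r * apexHeight o p) := by
  have h_pr : 0 ≤ apexHeight p r := by unfold apexHeight; positivity
  have h_oq : 0 ≤ apexHeight o q := by unfold apexHeight; positivity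
  have h_pqr := apexHeight_triangle p r hq
  have h_por := apexHeight_triangle p r ho
  have h_opq := apexHeight_triangle o q hp
  have h_orq := apexHeight_triangle o q hr
  rw [apexHeight_comm p o] at h_por
  rw [apexHeight_comm r q] at h_orq
  rcases le_total (min (apexHeight p q) (apexHeight o r))
    (min (apexHeight q r) (apexHeight o p)) with h | h
  · exact .inr (mul_le_four_mul_of_min_le_min h_pr h_oq h_pqr (by linarith) (by linarith)
      h_orq h)
  · exact .inl (mul_le_four_mul_of_min_le_min h_pr h_oq (by linarith) h_por (by linarith)
      h_opq h)

lemma halfSpaceDist_four_point (ho : 0 < o.2) (hp : 0 < p.2) (hq : 0 < q.2) (hr : 0 < r.2) :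
    halfSpaceDist p r + halfSpaceDist o q ≤
      max (halfSpaceDist p q + halfSpaceDist o r) (halfSpaceDist q r + halfSpaceDist o p) +
        2 * (4 * log 2) := by
  rw [← sub_le_iff_le_add, le_max_iff]
  have h_pr := halfSpaceDist_le hp hr
  have h_oq := halfSpaceDist_le ho hq
  refine (apexHeight_mul_apexHeight_le ho.le hp.le hq.le hr.le).imp (fun h ↦ ?_) (fun h ↦ ?_)
  · have := log_add_log_le_of_mul_le_four_mul (apexHeight_pos hp hr) (apexHeight_pos ho hq)
      (apexHeight_pos hp hq) (apexHeight_pos ho hr) h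
    linarith [le_halfSpaceDist hp hq, le_halfSpaceDist ho hr]
  · have := log_add_log_le_of_mul_le_four_mul (apexHeight_pos hp hr) (apexHeight_pos ho hq)
      (apexHeight_pos hq hr) (apexHeight_pos ho hp) h
    linarith [le_halfSpaceDist hq hr, le_halfSpaceDist ho hp]

lemma log_apexHeight_le_max_add (ho : 0 < o.2) (hp : 0 < p.2) (hq : 0 < q.2) :
    log (apexHeight p q) ≤ max (log (apexHeight o p)) (log (apexHeight o q)) + log 2 := by
  have h_triangle := apexHeight_triangle p q ho.le
  rw [apexHeight_comm p o] at h_triangle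
  rw [← sub_le_iff_le_add, le_max_iff, sub_le_iff_le_add, sub_le_iff_le_add,
    ← log_mul (apexHeight_pos ho hp).ne' two_ne_zero,
    ← log_mul (apexHeight_pos ho hq).ne' two_ne_zero]
  refine (le_total (apexHeight o q) (apexHeight o p)).imp (fun h ↦ ?_) (fun h ↦ ?_) <;>
    exact log_le_log (apexHeight_pos hp hq) (by linarith)

lemma half_min_halfSpaceDist_sub_le_gromovProd (ho : 0 < o.2) (hp : 1 ≤ p.2) (hq : 1 ≤ q.2) :
    min (halfSpaceDist o p) (halfSpaceDist o q) / 2 - (log o.2 / 2 + 3 * log 2) ≤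
      gromovProd halfSpaceDist o p q := by
  have hp₀ : 0 < p.2 := one_pos.trans_le hp
  have hq₀ : 0 < q.2 := one_pos.trans_le hq
  have h_op := le_halfSpaceDist ho hp₀
  have h_oq := le_halfSpaceDist ho hq₀
  have h_pq := halfSpaceDist_le hp₀ hq₀
  unfold gromovProd
  rcases le_max_iff.1 (sub_le_iff_le_add.2 (log_apexHeight_le_max_add ho hp₀ hq₀)) with h | h
  · linarith [halfSpaceDist_le ho hq₀, log_nonneg hq,
      min_le_right (halfSpaceDist o p) (halfSpaceDist o q)]
  · linarith [halfSpaceDist_le ho hp₀, log_nonneg hp,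
      min_le_left (halfSpaceDist o p) (halfSpaceDist o q)]

lemma gromovEquiv_halfSpaceDist {u v : ℕ → X × ℝ} (ho : 0 < o.2)
    (hu : ∀ k, 1 ≤ (u k).2) (hv : ∀ k, 1 ≤ (v k).2)
    (hu_dist : Tendsto (fun k ↦ halfSpaceDist o (u k)) atTop atTop)
    (hv_dist : Tendsto (fun k ↦ halfSpaceDist o (v k)) atTop atTop) :
    GromovEquiv halfSpaceDist o u v :=
  gromovEquiv_of_half_min_dist_sub_le
    (fun i j ↦ half_min_halfSpaceDist_sub_le_gromovProd ho (hu i) (hv j)) hu_dist hv_dist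

lemma GromovEquiv.tendsto_halfSpaceDist {u : ℕ → X × ℝ} (hu : ∀ k, 0 < (u k).2)
    (h : GromovEquiv halfSpaceDist o u u) :
    Tendsto (fun k ↦ halfSpaceDist o (u k)) atTop atTop :=
  h.tendsto_dist fun k ↦ halfSpaceDist_self (hu k)

lemma tendsto_halfSpaceDist_vertical_exp (ho : 0 < o.2) :
    Tendsto (fun k : ℕ ↦ halfSpaceDist o (o.1, exp k)) atTop atTop := by
  refine tendsto_atTop_mono (fun k ↦ ?_)
    (tendsto_atTop_add_const_right _ (-log o.2) tendsto_natCast_atTop_atTop)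
  rw [← Prod.mk.eta (p := o), halfSpaceDist_vertical o.1 ho (exp_pos k), log_exp]
  linarith [neg_abs_le (log o.2 - k)]

theorem real_horoball_admissible_general (X : Type*) [PseudoMetricSpace X] :
    (∀ (x y : X) (m n : ℝ),
      |halfSpaceDist (x, exp m) (y, exp n) -
        (2 * log (dist x y * exp (-max m n) + 1) + |m - n|)| ≤ 2 * log 2) ∧
    (∀ x y : X, halfSpaceDist (x, 1) (y, 1) ≤ 1 →
      dist x y / 2 ≤ halfSpaceDist (x, 1) (y, 1)) ∧
    (∀ p : X × ℝ, 1 ≤ p.2 → ∃ (x : X) (t : ℝ), 0 ≤ t ∧ halfSpaceDist p (x, exp t) = 0) ∧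
    (∀ (x : X) (s t : ℝ), halfSpaceDist (x, exp s) (x, exp t) = |s - t|) ∧
    (∀ o p q r : X × ℝ, 0 < o.2 → 0 < p.2 → 0 < q.2 → 0 < r.2 →
      min (gromovProd halfSpaceDist o p q) (gromovProd halfSpaceDist o q r) - 4 * log 2 ≤
        gromovProd halfSpaceDist o p r) ∧
    (∀ o : X × ℝ, 0 < o.2 →
      (∃ u : ℕ → X × ℝ, (∀ k, 1 ≤ (u k).2) ∧ GromovEquiv halfSpaceDist o u u) ∧
      ∀ u v : ℕ → X × ℝ, (∀ k, 1 ≤ (u k).2) → (∀ k, 1 ≤ (v k).2) →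
        GromovEquiv halfSpaceDist o u u → GromovEquiv halfSpaceDist o v v →
          GromovEquiv halfSpaceDist o u v) := by
  refine ⟨abs_halfSpaceDist_exp_sub_le, fun x y ↦ half_dist_le_halfSpaceDist_horosphere,
    fun p hp ↦ ⟨p.1, log p.2, log_nonneg hp, ?_⟩, halfSpaceDist_vertical_exp,
    fun o p q r ho hp hq hr ↦
      min_gromovProd_sub_le_of_four_point (halfSpaceDist_four_point ho hp hq hr),
    fun o ho ↦ ⟨⟨fun k ↦ (o.1, exp k), ?_⟩, fun u v hu hv h_u h_v ↦ ?_⟩⟩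
  · rw [exp_log (one_pos.trans_le hp)]
    exact halfSpaceDist_self (one_pos.trans_le hp)
  · have h_height (k : ℕ) : 1 ≤ exp k := one_le_exp k.cast_nonneg
    have h_dist := tendsto_halfSpaceDist_vertical_exp ho
    exact ⟨h_height, gromovEquiv_halfSpaceDist ho h_height h_height h_dist h_dist⟩
  · exact gromovEquiv_halfSpaceDist ho hu hv
      (h_u.tendsto_halfSpaceDist fun k ↦ one_pos.trans_le (hu k))
      (h_v.tendsto_halfSpaceDist fun k ↦ one_pos.trans_le (hv k))

end HalfSpace

lemma upDist_eq_halfSpaceDist : upDist (N := N) = halfSpaceDist := by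
  ext p q
  simp only [upDist, halfSpaceDist, dist_eq_norm]

/-- **Proposition 3.6.** The horoball `H = {x ∈ ℝ^{N+1}_+ : x_{N+1} ≥ 1}` of
real hyperbolic space, with the vertical rays `γ_x(t) = (x, e^t)`, is an
admissible horoball over `ℝ^{N}`:
(i) a uniform logarithmic distance formula holds,
(ii) on the horosphere `{x_{N+1} = 1}` the hyperbolic metric is bi-Lipschitz
below by the Euclidean metric at small scales,
(iii) every point of `H` lies within uniformly bounded distance of a vertical
ray,
(iv) the vertical rays are geodesic rays, `H` is Gromov hyperbolic, and its
Gromov boundary is a single point. -/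
theorem real_horoball_admissible :
    -- (i) the admissible-horoball distance formula, with a universal constant
    (∃ C : ℝ, 0 < C ∧ ∀ (N : ℕ) (x y : EuclideanSpace ℝ (Fin N)) (m n : ℝ),
      0 ≤ m → 0 ≤ n →
      |upDist (x, Real.exp m) (y, Real.exp n) -
        (2 * Real.log (‖x - y‖ * Real.exp (-(max m n)) + 1) + |m - n|)| ≤ C) ∧
    -- (ii) lower bi-Lipschitz bound at scale ≤ 1 on the horosphere
    (∃ L : ℝ, 1 ≤ L ∧ ∀ (N : ℕ) (x y : EuclideanSpace ℝ (Fin N)),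
      upDist (x, 1) (y, 1) ≤ 1 → ‖x - y‖ / L ≤ upDist (x, 1) (y, 1)) ∧
    -- (iii) every point of `H` is within distance `C` of some vertical ray
    (∃ C : ℝ, 0 < C ∧ ∀ (N : ℕ) (p : EuclideanSpace ℝ (Fin N) × ℝ), 1 ≤ p.2 →
      ∃ (x : EuclideanSpace ℝ (Fin N)) (t : ℝ), 0 ≤ t ∧
        upDist p (x, Real.exp t) ≤ C) ∧
    -- (iv) vertical rays are unit-speed geodesic rays …
    (∀ (N : ℕ) (x : EuclideanSpace ℝ (Fin N)) (s t : ℝ), 0 ≤ s → 0 ≤ t →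
      upDist (x, Real.exp s) (x, Real.exp t) = |s - t|) ∧
    -- … `H` is Gromov hyperbolic …
    (∃ δ : ℝ, 0 ≤ δ ∧ ∀ (N : ℕ) (o p q r : EuclideanSpace ℝ (Fin N) × ℝ),
      1 ≤ o.2 → 1 ≤ p.2 → 1 ≤ q.2 → 1 ≤ r.2 →
      min (upGromovProd o p q) (upGromovProd o q r) - δ ≤ upGromovProd o p r) ∧
    -- … and the Gromov boundary of `H` is a single point
    (∀ N : ℕ, (∃ u : ℕ → EuclideanSpace ℝ (Fin N) × ℝ, upGromovSeq u) ∧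
      ∀ u v : ℕ → EuclideanSpace ℝ (Fin N) × ℝ,
        upGromovSeq u → upGromovSeq v → upGromovEquiv u v) := by
  choose h_formula h_horosphere h_ray_near h_ray h_hyperbolic h_boundary using
    fun N : ℕ ↦ real_horoball_admissible_general (EuclideanSpace ℝ (Fin N))
  simp only [upGromovSeq, upGromovEquiv, upGromovProd, upDist_eq_halfSpaceDist, ← dist_eq_norm]
  exact ⟨⟨2 * Real.log 2, by positivity, fun N x y m n _ _ ↦ h_formula N x y m n⟩,
    ⟨2, one_le_two, h_horosphere⟩,
    ⟨1, one_pos, fun N p hp ↦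
      let ⟨x, t, ht, h_zero⟩ := h_ray_near N p hp
      ⟨x, t, ht, h_zero.trans_le zero_le_one⟩⟩,
    fun N x s t _ _ ↦ h_ray N x s t,
    ⟨4 * Real.log 2, by positivity, fun N o p q r ho hp hq hr ↦
      h_hyperbolic N o p q r (by linarith) (by linarith) (by linarith) (by linarith)⟩,
    fun N ↦ ⟨(h_boundary N (0, 1) one_pos).1, fun u v hu hv ↦
      (h_boundary N (0, 1) one_pos).2 u v hu.1 hv.1 hu.2 hv.2⟩⟩

end RelHypPaper
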